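/- Let X, Y, Z be locally finite topological spaces, f : X → Y and g : Y → Z continuous maps, and α : π₀(X) → ℚ a function with finite support. Then f_!(α) : π₀(Y) → ℚ has finite support, and (g∘f)_!(α) = g_!(f_!(α)) as functions on π₀(Z). -/

import Mathlib

open scoped unitInterval

/-- The homotopy fiber of `f : X → Y` at `y : Y`: pairs `(x, p)` with `p` a path
from `f x` to `y`, topologized as a subspace of `X × C(I, Y)`. -/
abbrev HomotopyFiber {X Y : Type*} [TopologicalSpace X] [TopologicalSpace Y]
    (f : X → Y) (y : Y) : Type _ :=
  {p : X × C(I, Y) // p.2 0 = f p.1 ∧ p.2 1 = y}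

/-- The projection `i : F_y(f) → X`, `(x, p) ↦ x`. -/
def fiberIncl {X Y : Type*} [TopologicalSpace X] [TopologicalSpace Y]
    (f : X → Y) (y : Y) : HomotopyFiber f y → X :=
  fun p => p.1.1

/-- A space is locally finite if all its homotopy groups `π_n`, `n ≥ 1`, at all base
points are finite, and at each base point all but finitely many of them are trivial. -/
def IsLocallyFinite (X : Type*) [TopologicalSpace X] : Prop :=
  ∀ x : X, (∀ n : ℕ, 1 ≤ n → Finite (HomotopyGroup (Fin n) X x)) ∧
    ∃ N : ℕ, ∀ n : ℕ, N < n → Subsingleton (HomotopyGroup (Fin n) X x)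

/-- `μ(X, x) = ∏_{n ≥ 1} |π_n(X, x)|^{(-1)^n}`. -/
noncomputable def mu (X : Type*) [TopologicalSpace X] (x : X) : ℚ :=
  ∏ᶠ n : ℕ, (Nat.card (HomotopyGroup (Fin (n + 1)) X x) : ℚ) ^ ((-1 : ℤ) ^ (n + 1))

/-- The path component of a point, as an element of `π₀(X)`. -/
def toPi0 {X : Type*} [TopologicalSpace X] (x : X) : ZerothHomotopy X :=
  Quotient.mk (pathSetoid X) x

/-- The map `π₀(f) : π₀(X) → π₀(Y)` induced by a continuous map. -/
def pi0Map {X Y : Type*} [TopologicalSpace X] [TopologicalSpace Y] {f : X → Y}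
    (hf : Continuous f) : ZerothHomotopy X → ZerothHomotopy Y :=
  Quot.map f (fun _ _ h => ⟨h.somePath.map hf⟩)


/-- The pushforward `f_!(α)` of a finitely supported function `α : π₀(X) → ℚ` along a
map `f : X → Y`: its value on a component `c` of `Y` is the sum, over the path components
`z` of the homotopy fiber of `f` at (a representative of) `c`, of
`α([i(z̃)]) · μ(F, z̃)` for a representative `z̃` of `z`. -/
noncomputable def pushforward {X Y : Type*} [TopologicalSpace X] [TopologicalSpace Y]
    (f : X → Y) (α : ZerothHomotopy X → ℚ) : ZerothHomotopy Y → ℚ :=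
  fun c => ∑ᶠ z : ZerothHomotopy (HomotopyFiber f c.out),
    α (toPi0 (fiberIncl f c.out z.out)) * mu (HomotopyFiber f c.out) z.out


open scoped Topology Topology.Homotopy

namespace HF

section Conn

variable {E B : Type*} [TopologicalSpace E] [TopologicalSpace B]

/-- A (continuous) path lifting function for `π`. -/
structure Conn (π : E → B) where
  lift : {a : E × C(I, B) // a.2 0 = π a.1} × I → E
  cont : Continuous lift
  lift_zero : ∀ a, lift (a, 0) = a.1.1
  proj : ∀ a s, π (lift (a, s)) = a.1.2 s

/-- strict fiber -/
abbrev Fib (π : E → B) (b : B) : Type _ := {e : E // π e = b}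

variable {π : E → B} (C : Conn π)

/-- transport along a path -/
def Conn.tr {b b' : B} (p : Path b b') (e : Fib π b) : Fib π b' :=
  ⟨C.lift (⟨(e.1, p.toContinuousMap), by simp [e.2]⟩, 1), by rw [C.proj]; simp⟩

lemma Conn.continuous_tr {b b' : B} (p : Path b b') : Continuous (C.tr p) := by
  unfold Conn.tr
  refine Continuous.subtype_mk (C.cont.comp ?_) _
  fun_prop

lemma toPi0_eq {A : Type*} [TopologicalSpace A] {a b : A} : toPi0 a = toPi0 b ↔ Joined a b :=
  Quotient.eq (r := pathSetoid A)

lemma toPi0_out {A : Type*} [TopologicalSpace A] (z : ZerothHomotopy A) : toPi0 z.out = z :=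
  Quotient.out_eq (s := pathSetoid A) z

lemma joined_of_fun {A : Type*} [TopologicalSpace A] (g : I → A) (hg : Continuous g) :
    Joined (g 0) (g 1) := ⟨⟨⟨g, hg⟩, rfl, rfl⟩⟩

lemma Joined.mapc {A A' : Type*} [TopologicalSpace A] [TopologicalSpace A'] {a b : A}
    (h : Joined a b) {g : A → A'} (hg : Continuous g) : Joined (g a) (g b) :=
  ⟨h.somePath.map hg⟩

lemma Conn.joined_tr {b b' : B} (p : Path b b') (e : Fib π b) (e' : Fib π b')
    (Γ : Path e.1 e'.1) (h : ∀ s, π (Γ s) = p s) : Joined (C.tr p e) e' := by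
  -- first path
  let q : I → C(I, B) := fun u => ⟨fun s => p (σ (σ u * σ s)), by fun_prop⟩
  have hq : Continuous q := by
    apply ContinuousMap.continuous_of_continuous_uncurry
    simp only [Function.uncurry_def, q, ContinuousMap.coe_mk]
    fun_prop
  have h1 := joined_of_fun (A := Fib π b')
    (fun u => ⟨C.lift (⟨(Γ u, q u), by simp [q, h]⟩, 1), by rw [C.proj]; simp [q]⟩) (by
      refine Continuous.subtype_mk (C.cont.comp ?_) _
      fun_prop)
  have h2 := joined_of_fun (A := Fib π b')
    (fun u => ⟨C.lift (⟨(e'.1, ContinuousMap.const I b'), by simp [e'.2]⟩, u), by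
        rw [C.proj]; simp⟩) (by
      refine Continuous.subtype_mk (C.cont.comp ?_) _
      fun_prop)
  have e1 : C.tr p e = ⟨C.lift (⟨(Γ 0, q 0), by rw [h]; simp [q]⟩, 1), by rw [C.proj]; simp [q]⟩ := by
    apply Subtype.ext
    simp only [Conn.tr]
    congr 2
    apply Subtype.ext
    ext <;> simp [q]
  have e2 : (⟨C.lift (⟨(e'.1, ContinuousMap.const I b'), by simp [e'.2]⟩, 0), by
        rw [C.proj]; simp⟩ : Fib π b') = e' := by
    apply Subtype.ext
    exact C.lift_zero _
  have e3 : (⟨C.lift (⟨(e'.1, ContinuousMap.const I b'), by simp [e'.2]⟩, 1), by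
        rw [C.proj]; simp⟩ : Fib π b') = ⟨C.lift (⟨(Γ 1, q 1), by rw [h]; simp [q]⟩, 1), by
          rw [C.proj]; simp [q]⟩ := by
    apply Subtype.ext
    simp only
    congr 2
    apply Subtype.ext
    ext <;> simp [q]
  rw [e1]
  refine h1.trans ?_
  rw [e2] at h2
  exact (h2.trans (e3 ▸ Joined.refl _)).symm

/-- the lifted path -/
def Conn.path {b b' : B} (p : Path b b') (e : Fib π b) : Path e.1 (C.tr p e).1 where
  toFun s := C.lift (⟨(e.1, p.toContinuousMap), by simp [e.2]⟩, s)
  continuous_toFun := C.cont.comp (by fun_prop)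
  source' := by rw [C.lift_zero]
  target' := rfl

lemma Conn.path_proj {b b' : B} (p : Path b b') (e : Fib π b) (s : I) :
    π (C.path p e s) = p s := C.proj _ _

/-- map on path components -/
def pi0 {A A' : Type*} [TopologicalSpace A] [TopologicalSpace A'] (g : A → A')
    (hg : Continuous g) : ZerothHomotopy A → ZerothHomotopy A' :=
  Quotient.map (sa := pathSetoid A) (sb := pathSetoid A') g (fun _ _ h => Joined.mapc h hg)

@[simp] lemma pi0_toPi0 {A A' : Type*} [TopologicalSpace A] [TopologicalSpace A'] (g : A → A')
    (hg : Continuous g) (a : A) : pi0 g hg (toPi0 a) = toPi0 (g a) := rfl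

lemma pi0_ind {A : Type*} [TopologicalSpace A] {P : ZerothHomotopy A → Prop}
    (h : ∀ a, P (toPi0 a)) (z) : P z := Quotient.ind (s := pathSetoid A) h z

/-- transport on components -/
def Conn.tau {b b' : B} (p : Path b b') : ZerothHomotopy (Fib π b) → ZerothHomotopy (Fib π b') :=
  pi0 (C.tr p) (C.continuous_tr p)

lemma Conn.tau_eq {b b' : B} (p : Path b b') (e : Fib π b) (e' : Fib π b')
    (Γ : Path e.1 e'.1) (h : ∀ s, π (Γ s) = p s) : C.tau p (toPi0 e) = toPi0 e' :=
  toPi0_eq.2 (C.joined_tr p e e' Γ h)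

lemma Conn.tau_symm_tau {b b' : B} (p : Path b b') (z : ZerothHomotopy (Fib π b)) :
    C.tau p.symm (C.tau p z) = z := by
  induction z using pi0_ind with | h e => ?_
  exact C.tau_eq p.symm (C.tr p e) e (C.path p e).symm (fun s => by
    simp [Conn.path_proj, Path.symm_apply])

lemma Conn.tau_bijective {b b' : B} (p : Path b b') : Function.Bijective (C.tau p) := by
  refine Function.bijective_iff_has_inverse.2 ⟨C.tau p.symm, C.tau_symm_tau p, fun z => ?_⟩
  have := C.tau_symm_tau p.symm z
  rwa [Path.symm_symm] at this


lemma Conn.tr_symm_tr {b b' : B} (p : Path b b') :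
    (ContinuousMap.comp ⟨C.tr p.symm, C.continuous_tr _⟩ ⟨C.tr p, C.continuous_tr _⟩).Homotopic
      (ContinuousMap.id (Fib π b)) := by
  let q : I → C(I, B) := fun u => ⟨fun s => p (u * σ s), by fun_prop⟩
  have hq : Continuous q := by
    apply ContinuousMap.continuous_of_continuous_uncurry
    simp only [Function.uncurry_def, q, ContinuousMap.coe_mk]
    fun_prop
  let k : C(Fib π b, Fib π b) :=
    ⟨fun e => C.tr (Path.refl b) e, C.continuous_tr _⟩
  have h1 : (ContinuousMap.id (Fib π b)).Homotopic k := by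
    refine ⟨⟨⟨fun x => ⟨C.lift (⟨(x.2.1, ContinuousMap.const I b), by simp [x.2.2]⟩, x.1), by
        rw [C.proj]; simp⟩, ?_⟩, ?_, ?_⟩⟩
    · refine Continuous.subtype_mk (C.cont.comp ?_) _
      fun_prop
    · intro e
      apply Subtype.ext
      simp [C.lift_zero]
    · intro e
      rfl
  refine ContinuousMap.Homotopic.symm (h1.trans ?_)
  have key : ∀ x : I × Fib π b, (q x.1) 0 =
      π (C.lift (⟨(x.2.1, p.toContinuousMap), by simp [x.2.2]⟩, x.1)) := by
    intro x
    rw [C.proj]; simp [q]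
  refine ⟨⟨⟨fun x => ⟨C.lift (⟨(C.lift (⟨(x.2.1, p.toContinuousMap), by simp [x.2.2]⟩, x.1), q x.1),
    key x⟩, 1), by rw [C.proj]; simp [q]⟩, ?_⟩, ?_, ?_⟩⟩
  · refine Continuous.subtype_mk (C.cont.comp ?_) _
    refine Continuous.prodMk (Continuous.subtype_mk (Continuous.prodMk (C.cont.comp ?_) ?_) _) ?_
    all_goals fun_prop
  · intro e
    apply Subtype.ext
    simp only [k, Conn.tr]
    show C.lift _ = C.lift _
    congr 2
    apply Subtype.ext
    refine Prod.ext ?_ ?_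
    · simp [C.lift_zero]
    · ext s; simp [q]
  · intro e
    apply Subtype.ext
    show C.lift _ = C.lift _
    congr 2
    apply Subtype.ext
    refine Prod.ext ?_ ?_
    · rfl
    · ext s; simp [q, Path.symm_apply]

end Conn

section Loops

variable {N : Type*} {X : Type*} [TopologicalSpace X]

/-- relative homotopy of generalized loops is the same as being joined in the loop space. -/
lemma homotopic_iff_joined {x : X} (γ γ' : Ω^ N X x) : GenLoop.Homotopic γ γ' ↔ Joined γ γ' := by
  constructor
  · rintro ⟨H⟩
    refine ⟨⟨⟨fun s => ⟨H.toContinuousMap.curry s, fun t ht => ?_⟩, ?_⟩, ?_, ?_⟩⟩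
    · exact (H.eq_fst s ht).trans (γ.2 t ht)
    · exact Continuous.subtype_mk (map_continuous _) _
    · ext t; exact H.apply_zero t
    · ext t; exact H.apply_one t
  · rintro ⟨P⟩
    refine ⟨⟨⟨⟨fun z => P z.1 z.2, by fun_prop⟩, ?_, ?_⟩, ?_⟩⟩
    · intro t; simp
    · intro t; simp
    · intro s t ht
      exact ((P s).2 t ht).trans (γ.2 t ht).symm

/-- homotopy groups as path components of loop spaces -/
def hgEquiv (N : Type*) (x : X) : HomotopyGroup N X x ≃ ZerothHomotopy (Ω^ N X x) :=
  Quotient.congr (ra := GenLoop.Homotopic.setoid N x) (rb := pathSetoid _) (Equiv.refl _)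
    (fun γ γ' => homotopic_iff_joined γ γ')

/-- class of a loop -/
def hgMk {x : X} (γ : Ω^ N X x) : HomotopyGroup N X x := Quotient.mk (GenLoop.Homotopic.setoid N x) γ

lemma hgMk_eq {x : X} {γ γ' : Ω^ N X x} : hgMk γ = hgMk γ' ↔ Joined γ γ' := by
  rw [← homotopic_iff_joined]
  exact Quotient.eq (r := GenLoop.Homotopic.setoid N x)

lemma hgEquiv_mk {x : X} (γ : Ω^ N X x) : hgEquiv N x (hgMk γ) = toPi0 γ := rfl

lemma hg_ind {x : X} {P : HomotopyGroup N X x → Prop}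
    (h : ∀ γ, P (hgMk γ)) (z) : P z := Quotient.ind (s := GenLoop.Homotopic.setoid N x) h z

/-- maps of a cube constant on the boundary, with the boundary value -/
abbrev MM (N X : Type*) [TopologicalSpace X] : Type _ :=
  {a : C(I^N, X) × X // ∀ t ∈ Cube.boundary N, a.1 t = a.2}

/-- boundary value -/
def MM.bd (a : MM N X) : X := a.1.2

lemma MM.continuous_bd : Continuous (MM.bd : MM N X → X) :=
  continuous_snd.comp continuous_subtype_val

variable [Fintype N]

/-- auxiliary vector -/
noncomputable def vv (s : I) (t : I^N) : N → ℝ := fun i => (1 + 2 * (s : ℝ)) * ((t i : ℝ) - 1 / 2)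

lemma continuous_vv : Continuous (fun z : I × (I^N) => vv z.1 z.2) := by
  unfold vv; fun_prop

lemma vv_norm_le (s : I) (t : I^N) : ‖vv s t‖ ≤ 1 / 2 + s := by
  have hs := s.2.1
  rw [pi_norm_le_iff_of_nonneg (by positivity)]
  intro i
  have h0 := (t i).2.1
  have h1 := (t i).2.2
  rw [vv, Real.norm_eq_abs, abs_mul, abs_of_nonneg (by positivity : (0 : ℝ) ≤ 1 + 2 * s)]
  have : |(t i : ℝ) - 1 / 2| ≤ 1 / 2 := by rw [abs_le]; constructor <;> linarith
  nlinarith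

lemma vv_norm_bd (s : I) (t : I^N) (ht : t ∈ Cube.boundary N) : ‖vv s t‖ = 1 / 2 + s := by
  refine le_antisymm (vv_norm_le s t) ?_
  obtain ⟨i, hi⟩ := ht
  refine le_trans ?_ (norm_le_pi_norm (vv s t) i)
  have hs := s.2.1
  rw [vv, Real.norm_eq_abs, abs_mul, abs_of_nonneg (by positivity : (0 : ℝ) ≤ 1 + 2 * s)]
  rcases hi with hi | hi <;> rw [hi] <;> norm_num [abs_of_nonneg] <;> linarith

/-- clamped coordinates -/
noncomputable def cc (s : I) (t : I^N) : I^N := fun i => Set.projIcc 0 1 zero_le_one (vv s t i + 1 / 2)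

lemma cc_mem (s : I) (t : I^N) (h : ‖vv s t‖ = 1 / 2) : cc s t ∈ Cube.boundary N := by
  by_contra hc
  have : ‖vv s t‖ < 1 / 2 := by
    rw [pi_norm_lt_iff (by norm_num)]
    intro i
    by_contra hi
    push Not at hi
    apply hc
    refine ⟨i, ?_⟩
    rw [Real.norm_eq_abs, le_abs] at hi
    rcases hi with hi | hi
    · right
      exact Set.projIcc_of_right_le _ (by linarith)
    · left
      exact Set.projIcc_of_le_left _ (by linarith)
  linarith

lemma continuous_cc : Continuous (fun z : I × (I^N) => cc z.1 z.2) := by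
  unfold cc
  refine continuous_pi fun i => continuous_projIcc.comp ?_
  have := continuous_vv (N := N)
  fun_prop

/-- the lifting formula -/
noncomputable def mmFun (γ : C(I^N, X)) (p : C(I, X)) (s : I) (t : I^N) : X :=
  if ‖vv s t‖ ≤ 1 / 2 then γ (cc s t) else p (Set.projIcc 0 1 zero_le_one (‖vv s t‖ - 1 / 2))

lemma continuous_mmFun : Continuous (fun z : ({a : MM N X × C(I, X) // a.2 0 = a.1.bd} × I) × (I^N) =>
    mmFun z.1.1.1.1.1.1 z.1.1.1.2 z.1.2 z.2) := by
  unfold mmFun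
  have h1 : Continuous (fun z : ({a : MM N X × C(I, X) // a.2 0 = a.1.bd} × I) × (I^N) =>
      vv z.1.2 z.2) := continuous_vv.comp (by fun_prop : Continuous fun
        z : ({a : MM N X × C(I, X) // a.2 0 = a.1.bd} × I) × (I^N) => (z.1.2, z.2))
  have h2 : Continuous (fun z : ({a : MM N X × C(I, X) // a.2 0 = a.1.bd} × I) × (I^N) =>
      cc z.1.2 z.2) := continuous_cc.comp (by fun_prop : Continuous fun
        z : ({a : MM N X × C(I, X) // a.2 0 = a.1.bd} × I) × (I^N) => (z.1.2, z.2))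
  refine Continuous.if_le ?_ ?_ (by fun_prop) (by fun_prop) ?_
  · fun_prop
  · have : Continuous (fun z : ({a : MM N X × C(I, X) // a.2 0 = a.1.bd} × I) × (I^N) =>
      Set.projIcc (0 : ℝ) 1 zero_le_one (‖vv z.1.2 z.2‖ - 1 / 2)) :=
        continuous_projIcc.comp (by fun_prop)
    fun_prop
  · rintro ⟨⟨⟨⟨a, p⟩, ha⟩, s⟩, t⟩ h
    simp only at h ha ⊢
    rw [a.2 _ (cc_mem s t h), h, sub_self, Set.projIcc_of_le_left _ le_rfl]
    exact ha.symm

lemma continuous_mmFun' (z : {a : MM N X × C(I, X) // a.2 0 = a.1.bd} × I) :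
    Continuous (fun t : I^N => mmFun z.1.1.1.1.1 z.1.1.2 z.2 t) :=
  Continuous.comp (g := fun z : ({a : MM N X × C(I, X) // a.2 0 = a.1.bd} × I) × (I^N) =>
    mmFun z.1.1.1.1.1.1 z.1.1.1.2 z.1.2 z.2) (f := fun t => (z, t)) continuous_mmFun (by fun_prop)

/-- free loops fibration has a path lifting function -/
noncomputable def mmConn : Conn (MM.bd : MM N X → X) where
  lift z := ⟨(⟨fun t => mmFun z.1.1.1.1.1 z.1.1.2 z.2 t,
      continuous_mmFun' z⟩, z.1.1.2 z.2), by
    intro t ht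
    simp only [ContinuousMap.coe_mk, mmFun]
    rw [vv_norm_bd _ _ ht]
    split_ifs with h
    · have hs : z.2 = 0 := by
        apply Subtype.ext
        have := z.2.2.1
        show (z.2 : ℝ) = 0
        linarith
      rw [z.1.1.1.2 _ (cc_mem _ _ (by rw [vv_norm_bd _ _ ht, hs]; simp)), hs]
      exact z.1.2.symm
    · congr 1
      simp⟩
  cont := by
    refine Continuous.subtype_mk (Continuous.prodMk ?_ (by fun_prop)) _
    apply ContinuousMap.continuous_of_continuous_uncurry
    exact continuous_mmFun
  lift_zero a := by
    apply Subtype.ext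
    refine Prod.ext ?_ a.2
    ext t
    simp only [ContinuousMap.coe_mk, mmFun]
    rw [if_pos]
    · congr 1
      ext i
      simp [cc, vv]
    · simpa using vv_norm_le 0 t
  proj a s := rfl

/-- loops as fiber -/
def fibLoop (x : X) : Ω^ N X x ≃ₜ Fib (MM.bd : MM N X → X) x where
  toFun γ := ⟨⟨(γ.1, x), γ.2⟩, rfl⟩
  invFun a := ⟨a.1.1.1, fun t ht => (a.1.2 t ht).trans a.2⟩
  left_inv γ := rfl
  right_inv a := by
    apply Subtype.ext
    apply Subtype.ext
    exact Prod.ext rfl a.2.symm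
  continuous_toFun := by fun_prop
  continuous_invFun := by fun_prop

end Loops

/-- homeomorphisms on components -/
def pi0Congr {A A' : Type*} [TopologicalSpace A] [TopologicalSpace A'] (e : A ≃ₜ A') :
    ZerothHomotopy A ≃ ZerothHomotopy A' where
  toFun := pi0 e e.continuous
  invFun := pi0 e.symm e.symm.continuous
  left_inv z := by induction z using pi0_ind with | h a => simp
  right_inv z := by induction z using pi0_ind with | h a => simp

section Maps

variable {N : Type*} {X Y Z : Type*} [TopologicalSpace X] [TopologicalSpace Y] [TopologicalSpace Z]

/-- induced map on loops -/
def loopMap (f : C(X, Y)) (x : X) (γ : Ω^ N X x) : Ω^ N Y (f x) :=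
  ⟨f.comp γ.1, fun t ht => congrArg f (γ.2 t ht)⟩

lemma continuous_loopMap (f : C(X, Y)) (x : X) : Continuous (loopMap (N := N) f x) :=
  Continuous.subtype_mk ((ContinuousMap.continuous_postcomp f).comp continuous_subtype_val) _

/-- induced map on homotopy groups -/
def hgMap (f : C(X, Y)) (x : X) : HomotopyGroup N X x → HomotopyGroup N Y (f x) :=
  Quotient.map (sa := GenLoop.Homotopic.setoid N x) (sb := GenLoop.Homotopic.setoid N (f x))
    (loopMap f x) (fun _ _ h => (homotopic_iff_joined _ _).2
      (Joined.mapc ((homotopic_iff_joined _ _).1 h) (continuous_loopMap f x)))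

@[simp] lemma hgMap_mk (f : C(X, Y)) (x : X) (γ : Ω^ N X x) :
    hgMap f x (hgMk γ) = hgMk (loopMap f x γ) := rfl

lemma hgMap_comp (g : C(Y, Z)) (f : C(X, Y)) (x : X) :
    hgMap (N := N) (g.comp f) x = hgMap g (f x) ∘ hgMap f x := by
  funext z
  induction z using hg_ind with | h γ => rfl

lemma hgMap_id (x : X) : hgMap (N := N) (ContinuousMap.id X) x = id := by
  funext z
  induction z using hg_ind with | h γ => rfl

variable [Fintype N]

/-- change of base point -/
noncomputable def bpc (N : Type*) [Fintype N] {x x' : X} (p : Path x x') :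
    HomotopyGroup N X x ≃ HomotopyGroup N X x' :=
  (hgEquiv N x).trans <| (pi0Congr (fibLoop x)).trans <|
    (Equiv.ofBijective _ (mmConn.tau_bijective p)).trans <|
    (pi0Congr (fibLoop x')).symm.trans (hgEquiv N x').symm

lemma bpc_eq {x x' : X} (p : Path x x') (γ : Ω^ N X x) (γ' : Ω^ N X x')
    (H : C(I × (I^N), X)) (h0 : ∀ t, H (0, t) = γ t) (h1 : ∀ t, H (1, t) = γ' t)
    (hb : ∀ s, ∀ t ∈ Cube.boundary N, H (s, t) = p s) : bpc N p (hgMk γ) = hgMk γ' := by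
  unfold bpc
  simp only [Equiv.trans_apply]
  rw [Equiv.symm_apply_eq, Equiv.symm_apply_eq, hgEquiv_mk, hgEquiv_mk]
  refine mmConn.tau_eq p (fibLoop x γ) (fibLoop x' γ')
    ⟨⟨fun s => ⟨(H.curry s, p s), fun t ht => hb s t ht⟩, by fun_prop⟩, ?_, ?_⟩ (fun s => rfl)
  · apply Subtype.ext
    refine Prod.ext ?_ p.source
    ext t; exact h0 t
  · apply Subtype.ext
    refine Prod.ext ?_ p.target
    ext t; exact h1 t

lemma hgMap_homotopy {f g : C(X, Y)} (H : f.Homotopy g) (x : X) :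
    hgMap (N := N) g x = bpc N (H.evalAt x) ∘ hgMap f x := by
  funext z
  induction z using hg_ind with | h γ => ?_
  symm
  refine bpc_eq _ _ _ ⟨fun z => H (z.1, γ z.2), by fun_prop⟩ ?_ ?_ ?_
  · intro t; exact H.apply_zero _
  · intro t; exact H.apply_one _
  · intro s t ht
    show H (s, γ t) = H (s, x)
    rw [GenLoop.boundary γ t ht]

lemma hgMap_bij_of_homotopic_id {f : C(X, X)} (H : f.Homotopic (ContinuousMap.id X)) (x : X) :
    Function.Bijective (hgMap (N := N) f x) := by
  have := hgMap_homotopy (N := N) H.some x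
  rw [hgMap_id] at this
  exact ((bpc N _).bijective.of_comp_iff' _).1 (this ▸ Function.bijective_id)

lemma hgMap_bijective (f : C(X, Y)) (g : C(Y, X)) (h1 : (g.comp f).Homotopic (ContinuousMap.id X))
    (h2 : (f.comp g).Homotopic (ContinuousMap.id Y)) (x : X) :
    Function.Bijective (hgMap (N := N) f x) := by
  have a := hgMap_bij_of_homotopic_id (N := N) h1 x
  have b := hgMap_bij_of_homotopic_id (N := N) h2 (f x)
  rw [hgMap_comp] at a b
  have gb : Function.Bijective (hgMap (N := N) g (f x)) := ⟨b.1.of_comp, a.2.of_comp⟩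
  exact (gb.of_comp_iff' _).1 a

lemma card_bpc {x x' : X} (h : Joined x x') :
    Nat.card (HomotopyGroup N X x) = Nat.card (HomotopyGroup N X x') :=
  Nat.card_congr (bpc N h.somePath)

end Maps

section Fibers

variable {X Y : Type*} [TopologicalSpace X] [TopologicalSpace Y]

/-- the mapping path space -/
abbrev EE (f : C(X, Y)) : Type _ := {a : X × C(I, Y) // a.2 0 = f a.1}

/-- end point -/
def EE.fin {f : C(X, Y)} (a : EE f) : Y := a.1.2 1

/-- extension of paths -/
noncomputable def extFun (q w : C(I, Y)) (s r : I) : Y :=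
  if (r : ℝ) * (1 + s) ≤ 1 then q (Set.projIcc 0 1 zero_le_one ((r : ℝ) * (1 + s)))
  else w (Set.projIcc 0 1 zero_le_one ((r : ℝ) * (1 + s) - 1))

lemma continuous_extFun {A : Type*} [TopologicalSpace A] (q w : A → C(I, Y)) (s r : A → I)
    (hq : Continuous q) (hw : Continuous w) (hs : Continuous s) (hr : Continuous r)
    (h : ∀ a, q a 1 = w a 0) : Continuous fun a => extFun (q a) (w a) (s a) (r a) := by
  unfold extFun
  have h1 : Continuous fun a => (Set.projIcc (0 : ℝ) 1 zero_le_one ((r a : ℝ) * (1 + s a))) :=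
    continuous_projIcc.comp (by fun_prop)
  have h2 : Continuous fun a => (Set.projIcc (0 : ℝ) 1 zero_le_one ((r a : ℝ) * (1 + s a) - 1)) :=
    continuous_projIcc.comp (by fun_prop)
  refine Continuous.if_le (by fun_prop) (by fun_prop) (by fun_prop) (by fun_prop) ?_
  intro a ha
  rw [ha, sub_self, Set.projIcc_of_right_le _ le_rfl, Set.projIcc_of_le_left _ le_rfl]
  exact h a

lemma extFun_zero (q w : C(I, Y)) (s : I) : extFun q w s 0 = q 0 := by
  simp [extFun]

lemma extFun_one (q w : C(I, Y)) (s : I) (h : q 1 = w 0) : extFun q w s 1 = w s := by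
  unfold extFun
  split_ifs with hs
  · have : s = 0 := by
      apply Subtype.ext
      have := s.2.1
      show (s : ℝ) = 0
      simp only [Set.Icc.coe_one] at hs
      linarith
    subst this
    simpa using h
  · congr 1
    simp

/-- path lifting for the mapping path fibration -/
noncomputable def eeConn (f : C(X, Y)) : Conn (EE.fin : EE f → Y) where
  lift z := ⟨(z.1.1.1.1.1, ⟨fun r => extFun z.1.1.1.1.2 z.1.1.2 z.2 r,
    continuous_extFun _ _ _ _ continuous_const continuous_const continuous_const continuous_id
      (fun _ => z.1.2.symm)⟩), by
      simp only [ContinuousMap.coe_mk, extFun_zero]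
      exact z.1.1.1.2⟩
  cont := by
    refine Continuous.subtype_mk (Continuous.prodMk (by fun_prop) ?_) _
    apply ContinuousMap.continuous_of_continuous_uncurry
    simp only [Function.uncurry_def, ContinuousMap.coe_mk]
    exact continuous_extFun _ _ _ _ (by fun_prop) (by fun_prop) (by fun_prop) (by fun_prop)
      (fun z => z.1.1.2.symm)
  lift_zero a := by
    apply Subtype.ext
    refine Prod.ext rfl ?_
    ext r
    have : (r : ℝ) ≤ 1 := r.2.2
    simp [extFun, this]
  proj a s := extFun_one _ _ _ a.2.symm

/-- strict fibers of the mapping path fibration are homotopy fibers -/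
def fibEE (f : C(X, Y)) (y : Y) : Fib (EE.fin : EE f → Y) y ≃ₜ HomotopyFiber f y where
  toFun a := ⟨a.1.1, a.1.2, a.2⟩
  invFun a := ⟨⟨a.1, a.2.1⟩, a.2.2⟩
  left_inv a := rfl
  right_inv a := rfl
  continuous_toFun := by fun_prop
  continuous_invFun := by fun_prop

/-- The point of the homotopy fiber given by a path -/
def mkF (f : C(X, Y)) {x : X} {y : Y} (q : Path (f x) y) : HomotopyFiber f y :=
  ⟨(x, q.toContinuousMap), q.source, q.target⟩

lemma card_hg_homeo {A A' : Type*} [TopologicalSpace A] [TopologicalSpace A'] (e : A ≃ₜ A')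
    (N : Type*) [Fintype N] (a : A) :
    Nat.card (HomotopyGroup N A a) = Nat.card (HomotopyGroup N A' (e a)) := by
  refine Nat.card_congr (Equiv.ofBijective _ (hgMap_bijective (e : C(A, A')) (e.symm : C(A', A))
    ?_ ?_ a))
  · rw [Homeomorph.symm_comp_toContinuousMap]
  · rw [Homeomorph.toContinuousMap_comp_symm]

lemma card_hg_fiber (N : Type*) [Fintype N] (f : C(X, Y)) {x : X} {y : Y} (q : Path (f x) y) :
    Nat.card (HomotopyGroup N (HomotopyFiber f y) (mkF f q)) =
    Nat.card (HomotopyGroup N (HomotopyFiber f (f x)) (mkF f (Path.refl (f x)))) := by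
  let C := eeConn f
  let e0 : Fib (EE.fin : EE f → Y) (f x) := (fibEE f (f x)).symm (mkF f (Path.refl (f x)))
  let e1 : Fib (EE.fin : EE f → Y) y := (fibEE f y).symm (mkF f q)
  have h0 : Nat.card (HomotopyGroup N (HomotopyFiber f (f x)) (mkF f (Path.refl (f x)))) =
      Nat.card (HomotopyGroup N _ e0) := card_hg_homeo (fibEE f (f x)).symm N _
  have h1 : Nat.card (HomotopyGroup N (HomotopyFiber f y) (mkF f q)) =
      Nat.card (HomotopyGroup N _ e1) := card_hg_homeo (fibEE f y).symm N _
  rw [h0, h1]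
  have h2 : Nat.card (HomotopyGroup N _ e0) = Nat.card (HomotopyGroup N _ (C.tr q e0)) := by
    refine Nat.card_congr (Equiv.ofBijective _ (hgMap_bijective ⟨C.tr q, C.continuous_tr q⟩
      ⟨C.tr q.symm, C.continuous_tr _⟩ (C.tr_symm_tr q) ?_ e0))
    have := C.tr_symm_tr q.symm
    rwa [Path.symm_symm] at this
  rw [h2]
  symm
  apply card_bpc
  let k : I → C(I, Y) := fun s => ⟨fun r => q (s * r), by fun_prop⟩
  have hk : Continuous k := by
    apply ContinuousMap.continuous_of_continuous_uncurry
    simp only [Function.uncurry_def, k, ContinuousMap.coe_mk]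
    fun_prop
  refine C.joined_tr q e0 e1 ⟨⟨fun s => ⟨(x, k s), by simp [k]⟩, by fun_prop⟩, ?_, ?_⟩ ?_
  · apply Subtype.ext
    refine Prod.ext rfl ?_
    ext r
    simp [k, e0, fibEE, mkF]
  · apply Subtype.ext
    refine Prod.ext rfl ?_
    ext r
    simp [k, e1, fibEE, mkF]
  · intro s
    simp [EE.fin, k]

/-- prepending of paths -/
noncomputable def preFun (w q : C(I, Y)) (s r : I) : Y :=
  if (r : ℝ) * (1 + s) ≤ s then w (Set.projIcc 0 1 zero_le_one (s - (r : ℝ) * (1 + s)))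
  else q (Set.projIcc 0 1 zero_le_one ((r : ℝ) * (1 + s) - s))

lemma continuous_preFun {A : Type*} [TopologicalSpace A] (w q : A → C(I, Y)) (s r : A → I)
    (hw : Continuous w) (hq : Continuous q) (hs : Continuous s) (hr : Continuous r)
    (h : ∀ a, w a 0 = q a 0) : Continuous fun a => preFun (w a) (q a) (s a) (r a) := by
  unfold preFun
  have h1 : Continuous fun a => (Set.projIcc (0 : ℝ) 1 zero_le_one (s a - (r a : ℝ) * (1 + s a))) :=
    continuous_projIcc.comp (by fun_prop)
  have h2 : Continuous fun a => (Set.projIcc (0 : ℝ) 1 zero_le_one ((r a : ℝ) * (1 + s a) - s a)) :=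
    continuous_projIcc.comp (by fun_prop)
  refine Continuous.if_le (by fun_prop) (by fun_prop) (by fun_prop) (by fun_prop) ?_
  intro a ha
  rw [ha, sub_self, Set.projIcc_of_le_left _ le_rfl]
  exact h a

lemma preFun_zero (w q : C(I, Y)) (s : I) : preFun w q s 0 = w s := by
  simp [preFun, s.2.1]

lemma preFun_one (w q : C(I, Y)) (s : I) : preFun w q s 1 = q 1 := by
  have : ¬ (1 + (s : ℝ)) ≤ s := by linarith
  simp [preFun]

lemma continuous_fiberIncl (f : C(X, Y)) (y : Y) : Continuous (fiberIncl f y) := by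
  unfold fiberIncl; fun_prop

/-- path lifting for the projection from the homotopy fiber -/
noncomputable def hfConn (f : C(X, Y)) (y : Y) : Conn (fiberIncl f y) where
  lift z := ⟨(z.1.1.2 z.2, ⟨fun r => preFun (f.comp z.1.1.2) z.1.1.1.1.2 z.2 r,
    continuous_preFun _ _ _ _ continuous_const continuous_const continuous_const continuous_id
      (fun _ => (congrArg f z.1.2).trans z.1.1.1.2.1.symm)⟩), by
      simp only [ContinuousMap.coe_mk, preFun_zero]
      rfl, by
      simp only [ContinuousMap.coe_mk, preFun_one]
      exact z.1.1.1.2.2⟩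
  cont := by
    refine Continuous.subtype_mk (Continuous.prodMk (by fun_prop) ?_) _
    apply ContinuousMap.continuous_of_continuous_uncurry
    simp only [Function.uncurry_def, ContinuousMap.coe_mk]
    refine continuous_preFun _ _ _ _ ?_ (by fun_prop) (by fun_prop) (by fun_prop)
      (fun z => (congrArg f z.1.1.2).trans z.1.1.1.1.2.1.symm)
    exact (ContinuousMap.continuous_postcomp f).comp (by fun_prop)
  lift_zero a := by
    apply Subtype.ext
    refine Prod.ext a.2 ?_
    ext r
    simp only [preFun, ContinuousMap.coe_mk, Set.Icc.coe_zero, add_zero, mul_one, sub_zero,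
      Set.projIcc_val]
    split_ifs with h
    · have : r = 0 := Subtype.ext (le_antisymm h r.2.1)
      subst this
      rw [show (Set.projIcc (0 : ℝ) 1 zero_le_one (0 - ((0 : I) : ℝ))) = 0 by simp]
      exact (congrArg f a.2).trans a.1.1.2.1.symm
    · rfl
  proj a s := rfl

lemma hfConn_tr (f : C(X, Y)) {x x' : X} {y : Y} (δ : Path x x') (q : Path (f x) y) :
    ((hfConn f y).tr δ ⟨mkF f q, rfl⟩).1 = mkF f ((δ.map f.continuous).symm.trans q) := by
  apply Subtype.ext
  refine Prod.ext δ.target ?_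
  ext r
  show preFun _ _ 1 r = _
  simp only [mkF, Path.coe_toContinuousMap]
  rw [Path.trans_apply]
  simp only [preFun]
  have e : (r : ℝ) * (1 + ((1 : I) : ℝ)) = 2 * r := by simp; ring
  rw [e]
  split_ifs with h1 h2 h2
  · simp only [Path.symm_apply, Path.map_coe, Function.comp]
    show f (δ _) = f (δ _)
    congr 2
    apply Subtype.ext
    rw [Set.coe_projIcc]
    have := r.2.1
    simp only [Set.Icc.coe_one, unitInterval.coe_symm_eq] at h1 ⊢
    rw [min_eq_right (by linarith), max_eq_right (by linarith)]
  · simp at h1; exact absurd (by linarith) h2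
  · simp at h1; exact absurd h1 (by linarith)
  · show q _ = q _
    congr 1
    apply Subtype.ext
    rw [Set.coe_projIcc]
    have := r.2.2
    simp only [Set.Icc.coe_one] at h1 ⊢
    rw [min_eq_right (by linarith), max_eq_right (by linarith)]

lemma joined_mkF_iff_fiber (f : C(X, Y)) {x : X} {y : Y} (q q' : Path (f x) y) :
    Joined (⟨mkF f q, rfl⟩ : Fib (fiberIncl f y) x) ⟨mkF f q', rfl⟩ ↔ q.Homotopic q' := by
  constructor
  · rintro ⟨P⟩
    refine ⟨⟨⟨⟨fun z => (P z.1).1.1.2 z.2, by fun_prop⟩, ?_, ?_⟩, ?_⟩⟩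
    · intro r; exact congrArg (fun e : Fib (fiberIncl f y) x => e.1.1.2 r) P.source
    · intro r; exact congrArg (fun e : Fib (fiberIncl f y) x => e.1.1.2 r) P.target
    · rintro s r (rfl | hr)
      · simp only [ContinuousMap.coe_mk]
        rw [(P s).1.2.1]
        have := (P s).2
        unfold fiberIncl at this
        exact (congrArg f this).trans q.source.symm
      · obtain rfl : r = 1 := hr
        simp only [ContinuousMap.coe_mk]
        rw [(P s).1.2.2]
        simp
  · rintro ⟨H⟩
    refine ⟨⟨⟨fun s => ⟨⟨(x, H.toContinuousMap.curry s), ?_, ?_⟩, rfl⟩, by fun_prop⟩, ?_, ?_⟩⟩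
    · exact H.source s
    · exact H.target s
    · apply Subtype.ext
      apply Subtype.ext
      refine Prod.ext rfl ?_
      ext r
      exact H.apply_zero r
    · apply Subtype.ext
      apply Subtype.ext
      refine Prod.ext rfl ?_
      ext r
      exact H.apply_one r

lemma joined_mkF_iff (f : C(X, Y)) {x : X} {y : Y} (q q' : Path (f x) y) :
    Joined (mkF f q) (mkF f q') ↔
      ∃ δ : Path x x, ((δ.map f.continuous).symm.trans q).Homotopic q' := by
  constructor
  · rintro ⟨P⟩
    let δ : Path x x := P.map (continuous_fiberIncl f y)
    refine ⟨δ, ?_⟩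
    rw [← joined_mkF_iff_fiber]
    have := (hfConn f y).joined_tr δ ⟨mkF f q, rfl⟩ ⟨mkF f q', rfl⟩ P (fun s => rfl)
    convert this using 1
    apply Subtype.ext
    exact (hfConn_tr f δ q).symm
  · rintro ⟨δ, h⟩
    rw [← joined_mkF_iff_fiber] at h
    have h1 : Joined (mkF f q) (mkF f ((δ.map f.continuous).symm.trans q)) := by
      rw [← hfConn_tr]
      exact ⟨(hfConn f y).path δ ⟨mkF f q, rfl⟩⟩
    exact h1.trans (Joined.mapc h continuous_subtype_val)

lemma exists_mkF (f : C(X, Y)) {x : X} {y : Y} (z : HomotopyFiber f y)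
    (h : Joined (fiberIncl f y z) x) : ∃ q : Path (f x) y, Joined z (mkF f q) := by
  let q0 : Path (f (fiberIncl f y z)) y := ⟨z.1.2, z.2.1, z.2.2⟩
  have hz : z = mkF f q0 := rfl
  refine ⟨((h.somePath.map f.continuous).symm.trans q0), ?_⟩
  rw [← hfConn_tr]
  exact ⟨(hfConn f y).path h.somePath ⟨mkF f q0, rfl⟩⟩

lemma card_coset {G S : Type*} [Group G] (H : Subgroup G) (d : G → S) (hd : Function.Surjective d)
    (h : ∀ g g', d g = d g' ↔ g⁻¹ * g' ∈ H) : Nat.card S * Nat.card H = Nat.card G := by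
  rw [Subgroup.card_eq_card_quotient_mul_card_subgroup H]
  congr 1
  symm
  refine Nat.card_congr (Equiv.ofBijective (Quotient.lift d fun a b hab => ?_) ⟨?_, ?_⟩)
  · exact (h a b).2 (QuotientGroup.leftRel_apply.1 hab)
  · rintro ⟨a⟩ ⟨b⟩ hab
    exact Quotient.sound (QuotientGroup.leftRel_apply.2 ((h a b).1 hab))
  · intro s
    obtain ⟨g, rfl⟩ := hd s
    exact ⟨Quotient.mk _ g, rfl⟩

/-- components of the fiber over a given component -/
abbrev SS (f : C(X, Y)) (x : X) (y : Y) : Type _ :=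
  {z : ZerothHomotopy (HomotopyFiber f y) //
    pi0 (fiberIncl f y) (continuous_fiberIncl f y) z = toPi0 x}

/-- class of loop to component -/
noncomputable def dd (f : C(X, Y)) {x : X} {y : Y} (p : Path (f x) y) :
    Path.Homotopic.Quotient (f x) (f x) → SS f x y :=
  Quotient.lift (s := Path.Homotopic.setoid (f x) (f x))
    (fun ω => ⟨toPi0 (mkF f (ω.trans p)), rfl⟩) (fun ω ω' h => by
    apply Subtype.ext
    refine toPi0_eq.2 ?_
    exact Joined.mapc ((joined_mkF_iff_fiber f _ _).2 (Path.Homotopic.hcomp h (Path.Homotopic.refl p)))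
      continuous_subtype_val)

lemma card_SS (f : C(X, Y)) {x : X} {y : Y} (p : Path (f x) y) :
    Nat.card (SS f x y) * Nat.card (FundamentalGroup.map f x).range =
      Nat.card (FundamentalGroup Y (f x)) := by
  refine card_coset (G := FundamentalGroup Y (f x)) _ (dd f p) ?_ ?_
  · rintro ⟨z, hz⟩
    induction z using pi0_ind with | h z => ?_
    rw [pi0_toPi0, toPi0_eq] at hz
    obtain ⟨q, hq⟩ := exists_mkF f z hz
    refine ⟨Path.Homotopic.Quotient.mk (q.trans p.symm), ?_⟩
    apply Subtype.ext
    show toPi0 (mkF f ((q.trans p.symm).trans p)) = toPi0 z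
    rw [toPi0_eq]
    refine (hq.trans ?_).symm
    refine Joined.mapc ((joined_mkF_iff_fiber f _ _).2 ?_) continuous_subtype_val
    rw [← Path.Homotopic.Quotient.eq]
    simp
  · intro g g'
    induction g using Path.Homotopic.Quotient.ind with | mk ω => ?_
    induction g' using Path.Homotopic.Quotient.ind with | mk ω' => ?_
    have e1 : dd f p (Path.Homotopic.Quotient.mk ω) = dd f p (Path.Homotopic.Quotient.mk ω') ↔
        Joined (mkF f (ω.trans p)) (mkF f (ω'.trans p)) := by
      rw [← toPi0_eq, Subtype.ext_iff]
      rfl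
    rw [e1, joined_mkF_iff]
    constructor
    · rintro ⟨δ, h⟩
      refine ⟨(Path.Homotopic.Quotient.mk δ.symm), ?_⟩
      show Path.Homotopic.Quotient.map (Path.Homotopic.Quotient.mk δ.symm) f = (Path.Homotopic.Quotient.mk ω').trans (Path.Homotopic.Quotient.mk ω).symm
      rw [← Path.Homotopic.Quotient.eq] at h
      have h' : Path.Homotopic.Quotient.mk ((ω'.trans p).trans p.symm) =
        Path.Homotopic.Quotient.mk ((((δ.map f.continuous).symm.trans (ω.trans p))).trans p.symm) := by
        rw [Path.Homotopic.Quotient.mk_trans, ← h, ← Path.Homotopic.Quotient.mk_trans]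
      have h'' : Path.Homotopic.Quotient.mk ω' =
          (Path.Homotopic.Quotient.mk (δ.map f.continuous).symm).trans
            (Path.Homotopic.Quotient.mk ω) := by
        simpa using h'
      rw [h'']
      simp only [Path.Homotopic.Quotient.trans_assoc, Path.Homotopic.Quotient.mk_symm,
        Path.Homotopic.Quotient.trans_symm, Path.Homotopic.Quotient.trans_refl]
      rfl
    · rintro ⟨δ, h⟩
      induction δ using Path.Homotopic.Quotient.ind with | mk δ => ?_
      refine ⟨δ.symm, ?_⟩
      rw [← Path.Homotopic.Quotient.eq]
      have h' : Path.Homotopic.Quotient.map (Path.Homotopic.Quotient.mk δ) f =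
        (Path.Homotopic.Quotient.mk ω').trans (Path.Homotopic.Quotient.mk ω).symm := h
      have h'' : (Path.Homotopic.Quotient.mk (δ.map f.continuous)).trans
          (Path.Homotopic.Quotient.mk ω) = Path.Homotopic.Quotient.mk ω' := by
        rw [Path.Homotopic.Quotient.mk_map, h']
        simp
      have e3 : (δ.symm.map f.continuous).symm = δ.map f.continuous := by
        ext r; simp
      rw [e3, Path.Homotopic.Quotient.mk_trans, Path.Homotopic.Quotient.mk_trans,
        ← Path.Homotopic.Quotient.trans_assoc, h'', ← Path.Homotopic.Quotient.mk_trans]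

end Fibers

section Delta

variable {N : Type*} {X Y : Type*} [TopologicalSpace X] [TopologicalSpace Y]

/-- induced map on loops, bundled -/
def loopMapC (N : Type*) (f : C(X, Y)) (x : X) : C(Ω^ N X x, Ω^ N Y (f x)) :=
  ⟨loopMap f x, continuous_loopMap f x⟩

/-- the projection of the fiber, bundled -/
def inclC (f : C(X, Y)) (y : Y) : C(HomotopyFiber f y, X) :=
  ⟨fiberIncl f y, continuous_fiberIncl f y⟩

/-- exchanging loops and fibers: forward -/
def swapTo (f : C(X, Y)) (x : X) (a : HomotopyFiber (loopMapC N f x) GenLoop.const) :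
    Ω^ N (HomotopyFiber f (f x)) (mkF f (Path.refl (f x))) :=
  ⟨⟨fun t => ⟨(a.1.1 t, ⟨fun s => a.1.2 s t, by fun_prop⟩),
      congrArg (fun γ : Ω^ N Y (f x) => γ t) a.2.1,
      congrArg (fun γ : Ω^ N Y (f x) => γ t) a.2.2⟩, by
    refine Continuous.subtype_mk (Continuous.prodMk (by fun_prop) ?_) _
    apply ContinuousMap.continuous_of_continuous_uncurry
    simp only [Function.uncurry_def, ContinuousMap.coe_mk]
    fun_prop⟩, by
    intro t ht
    apply Subtype.ext
    refine Prod.ext (GenLoop.boundary a.1.1 t ht) ?_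
    ext s
    exact GenLoop.boundary (a.1.2 s) t ht⟩

lemma continuous_swapTo (f : C(X, Y)) (x : X) : Continuous (swapTo (N := N) f x) := by
  refine Continuous.subtype_mk ?_ _
  apply ContinuousMap.continuous_of_continuous_uncurry
  refine Continuous.subtype_mk (Continuous.prodMk ?_ ?_) _
  · fun_prop
  · apply ContinuousMap.continuous_of_continuous_uncurry
    simp only [Function.uncurry_def, ContinuousMap.coe_mk]
    fun_prop

/-- exchanging loops and fibers: backward -/
def swapFrom (f : C(X, Y)) (x : X) (b : Ω^ N (HomotopyFiber f (f x)) (mkF f (Path.refl (f x)))) :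
    HomotopyFiber (loopMapC N f x) GenLoop.const :=
  ⟨(⟨⟨fun t => (b t).1.1, by fun_prop⟩, fun t ht => congrArg (fun z => z.1.1) (b.2 t ht)⟩,
    ⟨fun s => ⟨⟨fun t => (b t).1.2 s, by fun_prop⟩,
      fun t ht => congrArg (fun z => z.1.2 s) (b.2 t ht)⟩, by
      refine Continuous.subtype_mk ?_ _
      apply ContinuousMap.continuous_of_continuous_uncurry
      simp only [Function.uncurry_def, ContinuousMap.coe_mk]
      fun_prop⟩), by
    ext t
    exact (b t).2.1, by
    ext t
    exact (b t).2.2⟩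

lemma continuous_swapFrom (f : C(X, Y)) (x : X) : Continuous (swapFrom (N := N) f x) := by
  refine Continuous.subtype_mk (Continuous.prodMk ?_ ?_) _
  · refine Continuous.subtype_mk ?_ _
    apply ContinuousMap.continuous_of_continuous_uncurry
    simp only [Function.uncurry_def, ContinuousMap.coe_mk]
    fun_prop
  · apply ContinuousMap.continuous_of_continuous_uncurry
    refine Continuous.subtype_mk ?_ _
    apply ContinuousMap.continuous_of_continuous_uncurry
    simp only [Function.uncurry_def, ContinuousMap.coe_mk]
    fun_prop

/-- the fiber of loops is the loops of the fiber -/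
def swapHomeo (N : Type*) (f : C(X, Y)) (x : X) : HomotopyFiber (loopMapC N f x) GenLoop.const ≃ₜ
    Ω^ N (HomotopyFiber f (f x)) (mkF f (Path.refl (f x))) where
  toFun := swapTo f x
  invFun := swapFrom f x
  left_inv _ := rfl
  right_inv _ := rfl
  continuous_toFun := continuous_swapTo f x
  continuous_invFun := continuous_swapFrom f x

/-- kernel as a type -/
abbrev KK (N : Type*) (f : C(X, Y)) (x : X) : Type _ :=
  {z : HomotopyGroup N X x // hgMap f x z = hgMk GenLoop.const}

/-- the base point of the fiber -/
abbrev bF (f : C(X, Y)) (x : X) : HomotopyFiber f (f x) := mkF f (Path.refl (f x))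

/-- comparing components -/
def swapEquiv (N : Type*) (f : C(X, Y)) (x : X) :
    SS (loopMapC N f x) GenLoop.const GenLoop.const ≃ KK N (inclC f (f x)) (bF f x) :=
  Equiv.subtypeEquiv ((pi0Congr (swapHomeo N f x)).trans (hgEquiv N _).symm) (by
    intro z
    induction z using pi0_ind with | h a => ?_
    rw [pi0_toPi0, toPi0_eq]
    have : ((pi0Congr (swapHomeo N f x)).trans (hgEquiv N _).symm) (toPi0 a) =
      hgMk (swapTo f x a) := rfl
    rw [this, hgMap_mk, hgMk_eq]
    rfl)

lemma card_KK_loop (N : Type*) (f : C(X, Y)) (x : X) :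
    Nat.card (KK N (inclC f (f x)) (bF f x)) *
      Nat.card (FundamentalGroup.map (loopMapC N f x) GenLoop.const).range =
    Nat.card (FundamentalGroup (Ω^ N Y (f x)) GenLoop.const) := by
  rw [← Nat.card_congr (swapEquiv N f x)]
  exact card_SS (loopMapC N f x) (x := GenLoop.const) (y := GenLoop.const) (Path.refl _)

lemma card_range_of_comm {A A' B B' : Type*} (a : A ≃ A') (b : B ≃ B') (u : A → B) (v : A' → B')
    (h : ∀ z, v (a z) = b (u z)) : Nat.card (Set.range v) = Nat.card (Set.range u) := by
  have : Set.range v = b '' Set.range u := by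
    ext w
    constructor
    · rintro ⟨z, rfl⟩
      exact ⟨u (a.symm z), ⟨_, rfl⟩, by rw [← h, Equiv.apply_symm_apply]⟩
    · rintro ⟨_, ⟨z, rfl⟩, rfl⟩
      exact ⟨a z, h z⟩
  rw [this]
  exact Nat.card_image_of_injective b.injective _

lemma card_range_loop [DecidableEq N] (i : N) (f : C(X, Y)) (x : X) :
    Nat.card (FundamentalGroup.map (loopMapC {j // j ≠ i} f x) GenLoop.const).range =
      Nat.card (Set.range (hgMap (N := N) f x)) := by
  refine card_range_of_comm (homotopyGroupEquivFundamentalGroup i)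
    (homotopyGroupEquivFundamentalGroup i) (hgMap (N := N) f x)
    (FundamentalGroup.map (loopMapC {j // j ≠ i} f x) GenLoop.const) ?_
  intro z
  induction z using hg_ind with | h γ => ?_
  rfl

lemma card_range_one [Unique N] (f : C(X, Y)) (x : X) :
    Nat.card (FundamentalGroup.map f x).range =
      Nat.card (Set.range (hgMap (N := N) f x)) := by
  refine card_range_of_comm (homotopyGroupEquivFundamentalGroupOfUnique N)
    (homotopyGroupEquivFundamentalGroupOfUnique N) (hgMap (N := N) f x)
    (FundamentalGroup.map f x) ?_
  intro z
  induction z using hg_ind with | h γ => ?_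
  rfl

/-- reindexing -/
def hgCongr {M N : Type*} (e : M ≃ N) (x : X) : HomotopyGroup M X x ≃ HomotopyGroup N X x :=
  (hgEquiv M x).trans ((pi0Congr (GenLoop.congr x e)).trans (hgEquiv N x).symm)

lemma card_KK_congr {M N : Type*} (e : M ≃ N) (f : C(X, Y)) (x : X) :
    Nat.card (KK M f x) = Nat.card (KK N f x) := by
  refine Nat.card_congr (Equiv.subtypeEquiv (hgCongr e x) ?_)
  intro z
  induction z using hg_ind with | h γ => ?_
  have : hgMap f x (hgCongr e x (hgMk γ)) = hgCongr e (f x) (hgMap f x (hgMk γ)) := rfl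
  rw [this]
  have h2 : (hgMk GenLoop.const : HomotopyGroup N Y (f x)) = hgCongr e (f x) (hgMk GenLoop.const) := rfl
  rw [h2, EmbeddingLike.apply_eq_iff_eq]

/-- `ker(i_*) * range(f_*) = π_{n+1}(Y)` in cardinalities -/
lemma card_ker (n : ℕ) (f : C(X, Y)) (x : X) :
    Nat.card (KK (Fin n) (inclC f (f x)) (bF f x)) *
      Nat.card (Set.range (hgMap (N := Fin (n + 1)) f x)) =
    Nat.card (HomotopyGroup (Fin (n + 1)) Y (f x)) := by
  have h := card_KK_loop {j : Fin (n + 1) // j ≠ 0} f x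
  rw [card_range_loop (0 : Fin (n + 1))] at h
  rw [card_KK_congr (finSuccAboveEquiv (0 : Fin (n + 1))), h]
  exact (Nat.card_congr (homotopyGroupEquivFundamentalGroup (0 : Fin (n + 1)))).symm

lemma card_SS_one (f : C(X, Y)) {x : X} {y : Y} (p : Path (f x) y) :
    Nat.card (SS f x y) * Nat.card (Set.range (hgMap (N := Fin 1) f x)) =
      Nat.card (HomotopyGroup (Fin 1) Y (f x)) := by
  rw [← card_range_one, card_SS f p]
  exact (Nat.card_congr (homotopyGroupEquivFundamentalGroupOfUnique (Fin 1))).symm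

/-- exactness at `π_N X` -/
lemma exact_mid (f : C(X, Y)) (x : X) (z : HomotopyGroup N X x) :
    (∃ w : HomotopyGroup N (HomotopyFiber f (f x)) (bF f x), hgMap (inclC f (f x)) (bF f x) w = z) ↔
      hgMap f x z = hgMk GenLoop.const := by
  induction z using hg_ind with | h γ => ?_
  constructor
  · rintro ⟨w, hw⟩
    rw [← hw]
    induction w using hg_ind with | h δ => ?_
    refine hgMk_eq.2 ?_
    let a := swapFrom f x δ
    exact ⟨⟨a.1.2, a.2.1, a.2.2⟩⟩
  · intro h
    rw [hgMap_mk, hgMk_eq] at h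
    obtain ⟨P⟩ := h
    exact ⟨hgMk (swapTo f x (mkF (loopMapC N f x) P)), rfl⟩

/-- induced homomorphism -/
def hgHom (N : Type*) [DecidableEq N] [Nonempty N] (f : C(X, Y)) (x : X) :
    HomotopyGroup N X x →* HomotopyGroup N Y (f x) where
  toFun := hgMap f x
  map_one' := rfl
  map_mul' z w := by
    induction z using hg_ind with | h γ => ?_
    induction w using hg_ind with | h δ => ?_
    have i : N := Classical.arbitrary N
    have h1 : (hgMk γ * hgMk δ : HomotopyGroup N X x) = hgMk (GenLoop.transAt i δ γ) :=
      HomotopyGroup.mul_spec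
    have h2 : (hgMk (loopMap f x γ) * hgMk (loopMap f x δ) : HomotopyGroup N Y (f x)) =
      hgMk (GenLoop.transAt i (loopMap f x δ) (loopMap f x γ)) :=
      HomotopyGroup.mul_spec
    rw [h1, hgMap_mk, hgMap_mk, hgMap_mk, h2]
    congr 1
    ext t
    show f (if _ then _ else _) = (if _ then _ else _)
    rw [apply_ite f]
    rfl

lemma card_ker_range (N : Type*) [DecidableEq N] [Nonempty N] (f : C(X, Y)) (x : X) :
    Nat.card (KK N f x) * Nat.card (Set.range (hgMap (N := N) f x)) =
      Nat.card (HomotopyGroup N X x) := by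
  rw [Subgroup.card_eq_card_quotient_mul_card_subgroup (hgHom N f x).ker, mul_comm]
  congr 1
  exact Nat.card_congr (QuotientGroup.quotientKerEquivRange (hgHom N f x)).toEquiv.symm

lemma card_range_eq_KK (N : Type*) (f : C(X, Y)) (x : X) :
    Nat.card (Set.range (hgMap (N := N) (inclC f (f x)) (bF f x))) = Nat.card (KK N f x) := by
  refine Nat.card_congr (Equiv.setCongr ?_)
  ext z
  exact exact_mid f x z

end Delta

section Numerics

lemma telescope (A B C i k K : ℕ → ℚ) (S : ℚ) (hA : ∀ m, A m = K m * k m)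
    (hK : ∀ m, K m * i (m + 1) = C (m + 1)) (hk : ∀ m, k m * i m = B m) (hS : S * i 0 = C 0)
    (hi : ∀ m, i m ≠ 0) (hC : ∀ m, C m ≠ 0) (M : ℕ) :
    (∏ m ∈ Finset.range M, A m ^ ((-1 : ℤ) ^ (m + 1))) * S *
      (∏ m ∈ Finset.range M, C m ^ ((-1 : ℤ) ^ (m + 1))) =
    (∏ m ∈ Finset.range M, B m ^ ((-1 : ℤ) ^ (m + 1))) * (C M / i M) ^ ((-1 : ℤ) ^ M) := by
  induction M with
  | zero => simp [← hS, hi]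
  | succ M ih =>
    rw [Finset.prod_range_succ, Finset.prod_range_succ, Finset.prod_range_succ]
    have h1 : A M * C M = (C (M + 1) / i (M + 1)) * (C M / i M) * B M := by
      rw [hA, ← hK, ← hk]
      have := hi M
      have := hi (M + 1)
      field_simp
    have h2 : A M ^ ((-1 : ℤ) ^ (M + 1)) * C M ^ ((-1 : ℤ) ^ (M + 1)) =
        (C (M + 1) / i (M + 1)) ^ ((-1 : ℤ) ^ (M + 1)) * (C M / i M) ^ ((-1 : ℤ) ^ (M + 1)) *
          B M ^ ((-1 : ℤ) ^ (M + 1)) := by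
      rw [← mul_zpow, h1, mul_zpow, mul_zpow]
    have h3 : (C M / i M) ^ ((-1 : ℤ) ^ M) * (C M / i M) ^ ((-1 : ℤ) ^ (M + 1)) = 1 := by
      rw [← zpow_add₀ (div_ne_zero (hC M) (hi M)), pow_succ]
      simp
    set u := (C (M + 1) / i (M + 1)) ^ ((-1 : ℤ) ^ (M + 1))
    set v := (C M / i M) ^ ((-1 : ℤ) ^ M)
    set v' := (C M / i M) ^ ((-1 : ℤ) ^ (M + 1))
    set a := A M ^ ((-1 : ℤ) ^ (M + 1))
    set c := C M ^ ((-1 : ℤ) ^ (M + 1))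
    set b := B M ^ ((-1 : ℤ) ^ (M + 1))
    set PA := ∏ m ∈ Finset.range M, A m ^ ((-1 : ℤ) ^ (m + 1))
    set PB := ∏ m ∈ Finset.range M, B m ^ ((-1 : ℤ) ^ (m + 1))
    set PC := ∏ m ∈ Finset.range M, C m ^ ((-1 : ℤ) ^ (m + 1))
    calc PA * a * S * (PC * c) = (PA * S * PC) * (a * c) := by ring
      _ = PB * v * (u * v' * b) := by rw [ih, h2]
      _ = (v * v') * (PB * b * u) := by ring
      _ = _ := by rw [h3, one_mul]

lemma mu_eq_range {X : Type*} [TopologicalSpace X] (x : X) (M : ℕ)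
    (h : ∀ m, M ≤ m → Nat.card (HomotopyGroup (Fin (m + 1)) X x) = 1) :
    mu X x = ∏ m ∈ Finset.range M,
      (Nat.card (HomotopyGroup (Fin (m + 1)) X x) : ℚ) ^ ((-1 : ℤ) ^ (m + 1)) := by
  unfold mu
  apply finprod_eq_prod_of_mulSupport_subset
  intro m hm
  by_contra hc
  simp only [Finset.coe_range, Set.mem_Iio, not_lt] at hc
  apply hm
  simp [h m hc]

lemma mu_congr {X X' : Type*} [TopologicalSpace X] [TopologicalSpace X'] (x : X) (x' : X')
    (h : ∀ m, Nat.card (HomotopyGroup (Fin (m + 1)) X x) =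
      Nat.card (HomotopyGroup (Fin (m + 1)) X' x')) : mu X x = mu X' x' := by
  unfold mu
  simp only [h]

lemma mu_joined {X : Type*} [TopologicalSpace X] {x x' : X} (h : Joined x x') :
    mu X x = mu X x' := mu_congr _ _ fun _ => card_bpc h

lemma lf_card {X : Type*} [TopologicalSpace X] (hX : IsLocallyFinite X) (x : X) :
    (∀ m, Nat.card (HomotopyGroup (Fin (m + 1)) X x) ≠ 0) ∧
    ∃ M, ∀ m, M ≤ m → Nat.card (HomotopyGroup (Fin (m + 1)) X x) = 1 := by
  obtain ⟨h1, M, h2⟩ := hX x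
  refine ⟨fun m => ?_, M, fun m hm => ?_⟩
  · have := h1 (m + 1) (by omega)
    exact Nat.card_pos.ne'
  · have := h2 (m + 1) (by omega)
    exact Nat.card_unique

lemma mu_ne_zero {X : Type*} [TopologicalSpace X] (hX : IsLocallyFinite X) (x : X) :
    mu X x ≠ 0 := by
  obtain ⟨h1, M, h2⟩ := lf_card hX x
  rw [mu_eq_range x M h2]
  refine Finset.prod_ne_zero_iff.2 fun m _ => zpow_ne_zero _ ?_
  exact_mod_cast h1 m

variable {X Y : Type*} [TopologicalSpace X] [TopologicalSpace Y]

lemma mu_base (hX : IsLocallyFinite X) (hY : IsLocallyFinite Y) (f : C(X, Y)) {x : X} {y : Y}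
    (p : Path (f x) y) :
    mu (HomotopyFiber f (f x)) (bF f x) * Nat.card (SS f x y) * mu Y (f x) = mu X x := by
  obtain ⟨hb, M1, hb1⟩ := lf_card hX x
  obtain ⟨hc, M2, hc1⟩ := lf_card hY (f x)
  let i : ℕ → ℕ := fun m => Nat.card (Set.range (hgMap (N := Fin (m + 1)) f x))
  let k : ℕ → ℕ := fun m => Nat.card (KK (Fin (m + 1)) f x)
  let K : ℕ → ℕ := fun m => Nat.card (KK (Fin (m + 1)) (inclC f (f x)) (bF f x))
  let A : ℕ → ℕ := fun m => Nat.card (HomotopyGroup (Fin (m + 1)) _ (bF f x))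
  have hA : ∀ m, A m = K m * k m := fun m => by
    show A m = K m * Nat.card (KK (Fin (m + 1)) f x)
    rw [← card_range_eq_KK]
    exact (card_ker_range (Fin (m + 1)) (inclC f (f x)) (bF f x)).symm
  have hK : ∀ m, K m * i (m + 1) = Nat.card (HomotopyGroup (Fin (m + 1 + 1)) Y (f x)) :=
    fun m => card_ker (m + 1) f x
  have hk : ∀ m, k m * i m = Nat.card (HomotopyGroup (Fin (m + 1)) X x) :=
    fun m => card_ker_range (Fin (m + 1)) f x
  have hi : ∀ m, i m ≠ 0 := fun m h => hb m (by rw [← hk, h, mul_zero])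
  have hS : Nat.card (SS f x y) * i 0 = Nat.card (HomotopyGroup (Fin (0 + 1)) Y (f x)) :=
    card_SS_one f p
  let M := max M1 M2
  have hi1 : ∀ m, M ≤ m → i m = 1 := fun m hm =>
    Nat.eq_one_of_mul_eq_one_left ((hk m).trans (hb1 m (le_trans (le_max_left _ _) hm)))
  have hA1 : ∀ m, M ≤ m → A m = 1 := fun m hm => by
    have e1 : k m = 1 := Nat.eq_one_of_mul_eq_one_right
      ((hk m).trans (hb1 m (le_trans (le_max_left _ _) hm)))
    have e2 : K m = 1 := Nat.eq_one_of_mul_eq_one_right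
      ((hK m).trans (hc1 (m + 1) (le_trans (le_max_right M1 M2) (le_trans hm (Nat.le_succ m)))))
    rw [hA, e1, e2]
  rw [mu_eq_range (bF f x) M hA1, mu_eq_range x M (fun m hm => hb1 m (le_trans (le_max_left _ _) hm)),
    mu_eq_range (f x) M (fun m hm => hc1 m (le_trans (le_max_right _ _) hm))]
  have := telescope (fun m => (A m : ℚ)) (fun m => (Nat.card (HomotopyGroup (Fin (m + 1)) X x) : ℚ))
    (fun m => (Nat.card (HomotopyGroup (Fin (m + 1)) Y (f x)) : ℚ)) (fun m => (i m : ℚ))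
    (fun m => (k m : ℚ)) (fun m => (K m : ℚ)) (Nat.card (SS f x y) : ℚ)
    (fun m => by exact_mod_cast hA m) (fun m => by exact_mod_cast hK m)
    (fun m => by exact_mod_cast hk m) (by exact_mod_cast hS) (fun m => by exact_mod_cast hi m)
    (fun m => by exact_mod_cast hc m) M
  refine this.trans ?_
  simp only [hi1 M le_rfl, hc1 M (le_max_right _ _)]
  simp

lemma card_SS_ne_zero (hY : IsLocallyFinite Y) (f : C(X, Y)) {x : X} {y : Y}
    (p : Path (f x) y) : Nat.card (SS f x y) ≠ 0 := by
  intro h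
  have := card_SS_one f p
  rw [h, zero_mul] at this
  exact (lf_card hY (f x)).1 0 this.symm

lemma mu_fiber (hX : IsLocallyFinite X) (hY : IsLocallyFinite Y) (f : C(X, Y)) {x : X} {y : Y}
    (z : HomotopyFiber f y) (h : toPi0 (fiberIncl f y z) = toPi0 x) :
    mu (HomotopyFiber f y) z * Nat.card (SS f x y) * mu Y y = mu X x := by
  let q0 : Path (f (fiberIncl f y z)) y := ⟨z.1.2, z.2.1, z.2.2⟩
  have hz : mu (HomotopyFiber f y) z = mu _ (bF f (fiberIncl f y z)) :=
    mu_congr _ _ fun m => card_hg_fiber (Fin (m + 1)) f q0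
  have hS : Nat.card (SS f x y) = Nat.card (SS f (fiberIncl f y z) y) := by
    unfold SS
    rw [h]
  rw [hz, hS, ← mu_joined ⟨q0⟩, ← mu_joined (toPi0_eq.1 h)]
  exact mu_base hX hY f q0

open Classical in
lemma push_formula (hX : IsLocallyFinite X) (hY : IsLocallyFinite Y) (f : C(X, Y))
    (α : ZerothHomotopy X → ℚ) (T : Finset (ZerothHomotopy X)) (hT : Function.support α ⊆ T)
    (c : ZerothHomotopy Y) :
    pushforward f α c * mu Y c.out =
      ∑ a ∈ T with pi0 f f.continuous a = c, α a * mu X a.out := by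
  unfold pushforward
  set y := c.out with hy
  let p : ZerothHomotopy (HomotopyFiber f y) → ZerothHomotopy X :=
    pi0 (fiberIncl f y) (continuous_fiberIncl f y)
  have hp : ∀ z, toPi0 (fiberIncl f y z.out) = p z := fun z => by
    conv_rhs => rw [← toPi0_out (z := z)]
    rfl
  have hcy : toPi0 y = c := toPi0_out c
  have hpath : ∀ a, pi0 f f.continuous a = c → Joined (f a.out) y := fun a ha => by
    rw [← toPi0_eq, hcy, ← ha]
    conv_rhs => rw [← toPi0_out (z := a)]
    rfl
  have hpc : ∀ z, pi0 f f.continuous (p z) = c := fun z => by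
    rw [← hp, pi0_toPi0, ← hcy, toPi0_eq]
    exact ⟨⟨z.out.1.2, z.out.2.1, z.out.2.2⟩⟩
  have hfin : ∀ a, {z | p z = a}.Finite := fun a => by
    by_cases ha : pi0 f f.continuous a = c
    · have h0 := card_SS_ne_zero hY f (hpath a ha).somePath
      have := (Nat.card_ne_zero.1 h0).2
      unfold SS at this
      rw [toPi0_out] at this
      exact @Set.toFinite _ {z | p z = a} this
    · convert Set.finite_empty
      ext z
      simp only [Set.mem_ofPred_eq, Set.mem_empty_iff_false, iff_false]
      rintro rfl
      exact ha (hpc z)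
  have hU : (p ⁻¹' (T : Set (ZerothHomotopy X))).Finite :=
    Set.Finite.preimage' T.finite_toSet (fun a _ => hfin a)
  have hsum : (∑ᶠ z : ZerothHomotopy (HomotopyFiber f y),
      α (toPi0 (fiberIncl f y z.out)) * mu (HomotopyFiber f y) z.out) =
      ∑ z ∈ hU.toFinset, α (p z) * mu (HomotopyFiber f y) z.out := by
    simp only [hp]
    apply finsum_eq_sum_of_support_subset
    intro z hz
    simp only [Set.Finite.coe_toFinset, Set.mem_preimage]
    apply hT
    intro h0
    apply hz
    simp [h0]
  rw [hsum, ← Finset.sum_fiberwise_of_maps_to (t := T) (g := p) (fun z hz => by simpa using hz),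
    Finset.sum_mul, Finset.sum_filter]
  refine Finset.sum_congr rfl fun a ha => ?_
  split_ifs with hac
  · have hS : Nat.card (SS f a.out y) ≠ 0 := card_SS_ne_zero hY f (hpath a hac).somePath
    have hcard : (hU.toFinset.filter (fun z => p z = a)).card = Nat.card (SS f a.out y) := by
      unfold SS
      rw [toPi0_out]
      symm
      apply Nat.subtype_card
      intro z
      simp only [Finset.mem_filter, Set.Finite.mem_toFinset, Set.mem_preimage]
      constructor
      · exact fun h => h.2
      · intro h
        have h' : p z = a := h
        exact ⟨h' ▸ ha, h'⟩
    have hterm : ∀ z ∈ hU.toFinset.filter (fun z => p z = a),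
        α (p z) * mu (HomotopyFiber f y) z.out =
          α a * mu X a.out / (Nat.card (SS f a.out y) * mu Y y) := by
      intro z hz
      have hz' : p z = a := (Finset.mem_filter.1 hz).2
      have := mu_fiber hX hY f (x := a.out) z.out (by rw [hp, hz', toPi0_out])
      have hy0 := mu_ne_zero hY y
      have hS' : (Nat.card (SS f a.out y) : ℚ) ≠ 0 := by exact_mod_cast hS
      rw [hz', ← this]
      field_simp
    rw [Finset.sum_congr rfl hterm, Finset.sum_const, hcard, nsmul_eq_mul]
    have hy0 := mu_ne_zero hY y
    have hS' : (Nat.card (SS f a.out y) : ℚ) ≠ 0 := by exact_mod_cast hS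
    field_simp
  · rw [Finset.sum_eq_zero, zero_mul]
    intro z hz
    exact absurd ((Finset.mem_filter.1 hz).2 ▸ hpc z) hac

end Numerics

open Classical in
theorem main {X Y Z : Type*} [TopologicalSpace X] [TopologicalSpace Y]
    [TopologicalSpace Z]
    (hX : IsLocallyFinite X) (hY : IsLocallyFinite Y) (hZ : IsLocallyFinite Z)
    (f : C(X, Y)) (g : C(Y, Z))
    (α : ZerothHomotopy X → ℚ) (hα : (Function.support α).Finite) :
    (Function.support (pushforward f α)).Finite ∧
    pushforward (g ∘ f) α = pushforward g (pushforward f α) := by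
  let T := hα.toFinset
  have hT : Function.support α ⊆ T := by simp [T]
  let T' := T.image (pi0 f f.continuous)
  have hT' : Function.support (pushforward f α) ⊆ T' := by
    intro c hc
    by_contra hn
    apply hc
    have h := push_formula hX hY f α T hT c
    rw [Finset.sum_eq_zero] at h
    · exact (mul_eq_zero.1 h).resolve_right (mu_ne_zero hY _)
    · intro a ha
      obtain ⟨h1, h2⟩ := Finset.mem_filter.1 ha
      exact absurd (Finset.mem_coe.2 (Finset.mem_image.2 ⟨a, h1, h2⟩)) hn
  refine ⟨T'.finite_toSet.subset hT', ?_⟩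
  funext d
  apply mul_right_cancel₀ (mu_ne_zero hZ d.out)
  rw [push_formula hY hZ g _ T' hT' d]
  refine (push_formula hX hZ (g.comp f) α T hT d).trans ?_
  rw [Finset.sum_congr rfl (fun b _ => push_formula hX hY f α T hT b)]
  have hcomp : ∀ a, pi0 (g.comp f) (g.comp f).continuous a =
      pi0 g g.continuous (pi0 f f.continuous a) := fun a => by
    induction a using pi0_ind with | h a => rfl
  simp only [hcomp]
  rw [← Finset.sum_fiberwise_of_maps_to (s := T.filter _) (t := T'.filter (fun b => pi0 g g.continuous b = d))
    (g := pi0 f f.continuous)]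
  · refine Finset.sum_congr rfl fun b hb => ?_
    refine Finset.sum_congr ?_ fun _ _ => rfl
    ext a
    simp only [Finset.mem_filter] at hb ⊢
    constructor
    · rintro ⟨⟨h1, _⟩, h3⟩
      exact ⟨h1, h3⟩
    · rintro ⟨h1, h3⟩
      exact ⟨⟨h1, h3 ▸ hb.2⟩, h3⟩
  · intro a ha
    obtain ⟨h1, h2⟩ := Finset.mem_filter.1 ha
    exact Finset.mem_filter.2 ⟨Finset.mem_image.2 ⟨a, h1, rfl⟩, h2⟩

end HF

theorem statement2 {X Y Z : Type*} [TopologicalSpace X] [TopologicalSpace Y]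
    [TopologicalSpace Z]
    (hX : IsLocallyFinite X) (hY : IsLocallyFinite Y) (hZ : IsLocallyFinite Z)
    {f : X → Y} (hf : Continuous f) {g : Y → Z} (hg : Continuous g)
    (α : ZerothHomotopy X → ℚ) (hα : (Function.support α).Finite) :
    (Function.support (pushforward f α)).Finite ∧
    pushforward (g ∘ f) α = pushforward g (pushforward f α) := by
  exact HF.main hX hY hZ ⟨f, hf⟩ ⟨g, hg⟩ α hα
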